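/- Let α = (α₁,α₂,α₃) be a random vector in ℝ³ with i.i.d. N(0, σ²) components, θ = ‖α‖, â = α/θ. Then the expected value of the random unitary Jones matrix R(α) = I₂cos(θ) − i(â·σ)sin(θ) is E[R(α)] = (1 − σ²)·exp(−σ²/2)·I₂. -/

import Mathlib

open Matrix MeasureTheory ProbabilityTheory

/-- The Pauli matrices `σ₁, σ₂, σ₃`. -/
noncomputable def pauli : Fin 3 → Matrix (Fin 2) (Fin 2) ℂ :=
  ![!![1, 0; 0, -1], !![0, 1; 1, 0], !![0, -Complex.I; Complex.I, 0]]

/-- `v·σ = v₁σ₁ + v₂σ₂ + v₃σ₃` for a real vector `v`. -/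
noncomputable def pdot (v : Fin 3 → ℝ) : Matrix (Fin 2) (Fin 2) ℂ :=
  (v 0 : ℂ) • pauli 0 + (v 1 : ℂ) • pauli 1 + (v 2 : ℂ) • pauli 2

/-- Euclidean norm of a vector in ℝ³. -/
noncomputable def nrm3 (α : Fin 3 → ℝ) : ℝ := Real.sqrt (α 0 ^ 2 + α 1 ^ 2 + α 2 ^ 2)

/-- `R(α) = cos(θ)I₂ − i sin(θ)(â·σ)` with `θ = ‖α‖`, `â = α/θ`. -/
noncomputable def Rjones (α : Fin 3 → ℝ) : Matrix (Fin 2) (Fin 2) ℂ :=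
  (Real.cos (nrm3 α) : ℂ) • 1 -
    (Complex.I * Real.sin (nrm3 α)) • pdot (fun i => α i / nrm3 α)

/-!
The law of `α` is symmetric and `R(α) + R(-α) = 2 cos ‖α‖ • 1`, so only `E[cos ‖α‖] • 1` survives in
the mean. Writing `α = σ x` with `x` standard Gaussian and integrating out the direction of `x`, the
radial Jacobian `r ^ (3 - 1)` turns `E[cos (σ ‖x‖)]` into the one-dimensional moment
`E[y ^ 2 cos (σ y)]`, `y ∼ N(0, 1)`, which is minus the second derivative of `exp (-t ^ 2 / 2)`
at `t = σ`.
-/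

open scoped NNReal

section StdGaussian
open Module Set

variable {E F : Type*} [NormedAddCommGroup E] [InnerProductSpace ℝ E]
  [NormedAddCommGroup F] [NormedSpace ℝ F]

/-- The density with respect to `volume` of the standard Gaussian law on a Euclidean space `E` of
arbitrary dimension, through which integrals against `stdGaussian E` become radial integrals. -/
noncomputable def stdGaussianPDFReal (x : E) : ℝ :=
  (2 * Real.pi) ^ (-(finrank ℝ E / 2 : ℝ)) * Real.exp (-(1 / 2) * ‖x‖ ^ 2)

lemma stdGaussianPDFReal_nonneg (x : E) : 0 ≤ stdGaussianPDFReal x := by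
  unfold stdGaussianPDFReal
  positivity

variable [FiniteDimensional ℝ E] [MeasurableSpace E] [BorelSpace E]

lemma integrable_exp_neg_mul_sq_norm {b : ℝ} (hb : 0 < b) :
    Integrable fun x : E => Real.exp (-b * ‖x‖ ^ 2) := by
  have h := GaussianFourier.integrable_cexp_neg_mul_sq_norm_add (b := b) (by simpa) 0 (0 : E)
  refine h.norm.congr (.of_forall fun x => ?_)
  simp [Complex.norm_exp, ← Complex.ofReal_pow]

lemma integrable_stdGaussianPDFReal : Integrable (stdGaussianPDFReal : E → ℝ) :=
  (integrable_exp_neg_mul_sq_norm one_half_pos).const_mul _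

lemma integral_withDensity_stdGaussianPDFReal (f : E → F) :
    ∫ x, f x ∂volume.withDensity (fun x => ENNReal.ofReal (stdGaussianPDFReal x)) =
      ∫ x, stdGaussianPDFReal x • f x := by
  have hmeas : Measurable (stdGaussianPDFReal : E → ℝ) := by
    unfold stdGaussianPDFReal
    fun_prop
  rw [integral_withDensity_eq_integral_toReal_smul hmeas.ennreal_ofReal
    (.of_forall fun _ => ENNReal.ofReal_lt_top)]
  simp_rw [ENNReal.toReal_ofReal (stdGaussianPDFReal_nonneg _)]

lemma integral_stdGaussianPDFReal_smul_cexp_inner (t : E) :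
    ∫ x, stdGaussianPDFReal x • Complex.exp (inner ℝ x t * Complex.I) =
      Complex.exp (-‖t‖ ^ 2 / 2) := by
  have hexp (x : E) : stdGaussianPDFReal x • Complex.exp (inner ℝ x t * Complex.I) =
      (2 * Real.pi : ℂ) ^ (-(finrank ℝ E / 2 : ℂ)) *
        Complex.exp (-(1 / 2) * ‖x‖ ^ 2 + Complex.I * inner ℝ t x) := by
    rw [stdGaussianPDFReal, Complex.real_smul, Complex.ofReal_mul,
      Complex.ofReal_cpow (by positivity), mul_assoc, Complex.ofReal_exp, ← Complex.exp_add,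
      real_inner_comm, mul_comm (Complex.I)]
    push_cast
    rfl
  have hbase : (Real.pi / (1 / 2) : ℂ) = 2 * Real.pi := by ring
  have hpi : (2 * Real.pi : ℂ) ≠ 0 := by simp [Real.pi_ne_zero]
  simp_rw [hexp]
  rw [integral_const_mul,
    GaussianFourier.integral_cexp_neg_mul_sq_norm_add (by norm_num) Complex.I t, hbase,
    ← mul_assoc, ← Complex.cpow_add _ _ hpi, neg_add_cancel, Complex.cpow_zero, one_mul,
    Complex.I_sq]
  ring_nf

lemma stdGaussian_eq_withDensity :
    stdGaussian E = volume.withDensity fun x => ENNReal.ofReal (stdGaussianPDFReal x) := by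
  have : IsFiniteMeasure
      (volume.withDensity fun x : E => ENNReal.ofReal (stdGaussianPDFReal x)) :=
    isFiniteMeasure_withDensity_ofReal integrable_stdGaussianPDFReal.2
  refine Measure.ext_of_charFun (funext fun t => ?_)
  rw [charFun_stdGaussian, charFun_apply, integral_withDensity_stdGaussianPDFReal,
    integral_stdGaussianPDFReal_smul_cexp_inner]

lemma stdGaussian_real : stdGaussian ℝ = gaussianReal 0 1 := by
  refine Measure.ext_of_charFun (funext fun t => ?_)
  simp [charFun_stdGaussian, charFun_gaussianReal, ← Complex.ofReal_pow, neg_div]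

lemma integral_norm_stdGaussian [Nontrivial E] (f : ℝ → F) :
    ∫ x, f ‖x‖ ∂stdGaussian E =
      (finrank ℝ E * volume.real (Metric.ball (0 : E) 1) *
          (2 * Real.pi) ^ (-(finrank ℝ E / 2 : ℝ))) •
        ∫ r in Ioi (0 : ℝ), (r ^ (finrank ℝ E - 1) * Real.exp (-(1 / 2) * r ^ 2)) • f r := by
  rw [stdGaussian_eq_withDensity, integral_withDensity_stdGaussianPDFReal]
  simp_rw [stdGaussianPDFReal, mul_smul]
  rw [integral_smul, integral_fun_norm_addHaar volume fun r => Real.exp (-(1 / 2) * r ^ 2) • f r,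
    smul_comm, Nat.cast_smul_eq_nsmul, smul_comm (volume.real _)]

lemma integral_abs_pow_smul_gaussianReal (n : ℕ) (f : ℝ → F) :
    ∫ y, |y| ^ n • f |y| ∂gaussianReal 0 1 =
      (2 * (2 * Real.pi) ^ (-(1 / 2 : ℝ))) •
        ∫ r in Ioi (0 : ℝ), (r ^ n * Real.exp (-(1 / 2) * r ^ 2)) • f r := by
  simp_rw [← stdGaussian_real, ← Real.norm_eq_abs,
    integral_norm_stdGaussian fun r : ℝ => r ^ n • f r, smul_smul,
    Real.volume_real_ball zero_le_one]
  simp [mul_comm]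

/-- The area of the sphere is never needed: both sides are the same radial integral up to a
constant, which the case `f = 1` determines. -/
lemma integral_abs_pow_smul_integral_norm_stdGaussian [Nontrivial E] (f : ℝ → F) :
    (∫ y, |y| ^ (finrank ℝ E - 1) ∂gaussianReal 0 1) • ∫ x, f ‖x‖ ∂stdGaussian E =
      ∫ y, |y| ^ (finrank ℝ E - 1) • f |y| ∂gaussianReal 0 1 := by
  have hmass := integral_norm_stdGaussian (E := E) fun _ => (1 : ℝ)
  have hmoment := integral_abs_pow_smul_gaussianReal (finrank ℝ E - 1) fun _ => (1 : ℝ)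
  simp only [smul_eq_mul, mul_one, integral_const, probReal_univ] at hmass hmoment
  rw [integral_norm_stdGaussian, integral_abs_pow_smul_gaussianReal, hmoment, smul_smul,
    mul_assoc, mul_comm (integral _ _), ← hmass, mul_one]

lemma integral_sq_mul_cos_eq_neg_re_iteratedDeriv_charFun (μ : Measure ℝ) [IsFiniteMeasure μ]
    (hμ : MemLp id 2 μ) (t : ℝ) :
    ∫ x, x ^ 2 * Real.cos (t * x) ∂μ = -(iteratedDeriv 2 (charFun μ) t).re := by
  have hint : Integrable (fun x : ℝ => (x : ℂ) ^ 2 * Complex.exp (t * x * Complex.I)) μ := by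
    refine hμ.integrable_sq.mono (by fun_prop) (.of_forall fun x => ?_)
    rw [norm_mul, ← Complex.ofReal_mul, Complex.norm_exp_ofReal_mul_I]
    simp
  have hre (x : ℝ) :
      RCLike.re ((x : ℂ) ^ 2 * Complex.exp (t * x * Complex.I)) = x ^ 2 * Real.cos (t * x) := by
    rw [← Complex.ofReal_pow, ← Complex.ofReal_mul, RCLike.re_eq_complex_re,
      Complex.re_ofReal_mul, Complex.exp_ofReal_mul_I_re]
  rw [iteratedDeriv_charFun hμ, Complex.I_sq, neg_one_mul, Complex.neg_re, neg_neg,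
    ← RCLike.re_eq_complex_re, ← integral_re hint]
  simp_rw [hre]

lemma iteratedDeriv_two_charFun_gaussianReal (v : ℝ≥0) (t : ℝ) :
    iteratedDeriv 2 (charFun (gaussianReal 0 v)) t =
      (((v * t) ^ 2 - v) * Real.exp (-(v * t ^ 2 / 2)) : ℝ) := by
  have hexp (s : ℝ) : HasDerivAt (fun s : ℝ => Complex.exp (-(v * s ^ 2 / 2)))
      (-(v * s) * Complex.exp (-(v * s ^ 2 / 2))) s := by
    have hquad : HasDerivAt (fun z : ℂ => -(v * z ^ 2 / 2)) (-(v * s) : ℂ) (s : ℂ) := by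
      refine (((hasDerivAt_pow 2 (s : ℂ)).const_mul (v : ℂ)).div_const 2).neg.congr_deriv ?_
      push_cast
      ring
    rw [mul_comm]
    exact hquad.cexp.comp_ofReal
  have hφ : charFun (gaussianReal 0 v) = fun s : ℝ => Complex.exp (-(v * s ^ 2 / 2)) := by
    ext s
    simp [charFun_gaussianReal]
  have hlin : HasDerivAt (fun s : ℝ => -((v : ℂ) * s)) (-v) t := by
    simpa using ((hasDerivAt_id (t : ℂ)).const_mul (v : ℂ)).neg.comp_ofReal
  rw [iteratedDeriv_succ, iteratedDeriv_one, hφ, funext fun s => (hexp s).deriv,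
    (hlin.fun_mul (hexp t)).deriv]
  push_cast
  ring

lemma integral_sq_mul_cos_gaussianReal (v : ℝ≥0) (t : ℝ) :
    ∫ x, x ^ 2 * Real.cos (t * x) ∂gaussianReal 0 v =
      (v - (v * t) ^ 2) * Real.exp (-(v * t ^ 2 / 2)) := by
  rw [integral_sq_mul_cos_eq_neg_re_iteratedDeriv_charFun _ (memLp_id_gaussianReal 2),
    iteratedDeriv_two_charFun_gaussianReal, Complex.ofReal_re]
  ring

lemma integral_cos_mul_norm_stdGaussian (hE : finrank ℝ E = 3) (t : ℝ) :
    ∫ x, Real.cos (t * ‖x‖) ∂stdGaussian E = (1 - t ^ 2) * Real.exp (-(t ^ 2 / 2)) := by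
  have : Nontrivial E := nontrivial_of_finrank_eq_succ hE
  have hmoment : ∫ y : ℝ, y ^ 2 ∂gaussianReal 0 1 = 1 := by
    simpa using integral_sq_mul_cos_gaussianReal 1 0
  have hradial := integral_abs_pow_smul_integral_norm_stdGaussian (E := E) fun r => Real.cos (t * r)
  have hcos (y : ℝ) : Real.cos (t * |y|) = Real.cos (t * y) := by
    rw [← Real.cos_abs, abs_mul, abs_abs, ← abs_mul, Real.cos_abs]
  simpa [hE, hmoment, hcos, integral_sq_mul_cos_gaussianReal] using hradial

lemma map_sqrt_smul_stdGaussian {ι : Type*} [Fintype ι] (v : ℝ≥0) :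
    (stdGaussian (EuclideanSpace ℝ ι)).map (fun x => √(v : ℝ) • x.ofLp) =
      Measure.pi fun _ => gaussianReal 0 v := by
  have hscale : (gaussianReal 0 1).map (√(v : ℝ) * ·) = gaussianReal 0 v := by
    rw [gaussianReal_map_const_mul, mul_zero, mul_one]
    congr 1
    ext
    simp
  rw [← map_pi_eq_stdGaussian, Measure.map_map (by fun_prop) (by fun_prop), ← hscale,
    ← Measure.pi_map_pi fun _ => by fun_prop]
  rfl

instance isNegInvariant_gaussianReal_zero (v : ℝ≥0) : (gaussianReal 0 v).IsNegInvariant :=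
  ⟨gaussianReal_map_neg.trans (by rw [neg_zero])⟩

end StdGaussian

section Jones

lemma nrm3_eq_norm (x : Fin 3 → ℝ) : nrm3 x = ‖WithLp.toLp 2 x‖ := by
  simp [EuclideanSpace.norm_eq, nrm3, Fin.sum_univ_three]

lemma nrm3_smul (c : ℝ) (x : Fin 3 → ℝ) : nrm3 (c • x) = |c| * nrm3 x := by
  simp [nrm3_eq_norm, norm_smul]

lemma nrm3_neg (x : Fin 3 → ℝ) : nrm3 (-x) = nrm3 x := by
  simp [nrm3_eq_norm]

lemma nrm3_div_nrm3 {x : Fin 3 → ℝ} (hx : nrm3 x ≠ 0) : nrm3 (fun i => x i / nrm3 x) = 1 := by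
  have hdir : (fun i => x i / nrm3 x) = (nrm3 x)⁻¹ • x := by
    ext i
    simp [div_eq_inv_mul]
  rw [hdir, nrm3_smul, abs_of_nonneg (by simp [nrm3]), inv_mul_cancel₀ hx]

@[fun_prop]
lemma measurable_nrm3 : Measurable nrm3 := by
  unfold nrm3
  fun_prop

lemma isHermitian_pdot (v : Fin 3 → ℝ) : (pdot v).IsHermitian := by
  ext i j
  fin_cases i <;> fin_cases j <;> simp [pdot, pauli]

lemma pdot_mul_self (v : Fin 3 → ℝ) : pdot v * pdot v = ((nrm3 v ^ 2 : ℝ) : ℂ) • 1 := by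
  rw [nrm3, Real.sq_sqrt (by positivity)]
  ext i j
  fin_cases i <;> fin_cases j <;> simp [pdot, pauli, Matrix.mul_apply, Fin.sum_univ_two] <;>
    grind [Complex.I_sq]

lemma pdot_neg (v : Fin 3 → ℝ) : pdot (-v) = -pdot v := by
  simp only [pdot, Pi.neg_apply, Complex.ofReal_neg]
  module

lemma cos_smul_one_sub_sin_smul_mem_unitaryGroup {n : Type*} [Fintype n] [DecidableEq n]
    {P : Matrix n n ℂ} (hP : P.IsHermitian) (hP_sq : P * P = 1) (θ : ℝ) :
    (Real.cos θ : ℂ) • 1 - (Complex.I * Real.sin θ) • P ∈ unitaryGroup n ℂ := by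
  have hstar : star ((Real.cos θ : ℂ) • 1 - (Complex.I * Real.sin θ) • P) =
      (Real.cos θ : ℂ) • 1 + (Complex.I * Real.sin θ) • P := by
    simp [star_eq_conjTranspose, hP.eq, sub_eq_add_neg, -Complex.ofReal_cos, -Complex.ofReal_sin]
  rw [mem_unitaryGroup_iff, hstar]
  simp only [sub_mul, mul_add, smul_mul_smul, one_mul, mul_one, hP_sq]
  match_scalars
  · linear_combination Complex.cos_sq_add_sin_sq (θ : ℂ) - Complex.sin θ ^ 2 * Complex.I_sq
  · ring

lemma Rjones_mem_unitaryGroup (x : Fin 3 → ℝ) : Rjones x ∈ unitaryGroup (Fin 2) ℂ := by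
  by_cases hx : nrm3 x = 0
  · simp [Rjones, hx, one_mem]
  · refine cos_smul_one_sub_sin_smul_mem_unitaryGroup (isHermitian_pdot _) ?_ _
    simp [pdot_mul_self, nrm3_div_nrm3 hx]

lemma Rjones_add_Rjones_neg (x : Fin 3 → ℝ) :
    Rjones x + Rjones (-x) = (2 * Real.cos (nrm3 x) : ℂ) • 1 := by
  have hdir : (fun i => (-x) i / nrm3 x) = -fun i => x i / nrm3 x := by
    ext i
    simp [neg_div]
  rw [Rjones, Rjones, nrm3_neg, hdir, pdot_neg]
  module

lemma measurable_Rjones_apply (i j : Fin 2) : Measurable fun x => Rjones x i j := by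
  simp only [Rjones, pdot, Matrix.sub_apply, Matrix.smul_apply, Matrix.add_apply, smul_eq_mul]
  fun_prop

lemma integrable_Rjones_apply (ν : Measure (Fin 3 → ℝ)) [IsFiniteMeasure ν] (i j : Fin 2) :
    Integrable (fun x => Rjones x i j) ν :=
  .of_bound (measurable_Rjones_apply i j).aestronglyMeasurable 1
    (.of_forall fun x => entry_norm_bound_of_unitary (Rjones_mem_unitaryGroup x) i j)

lemma integral_Rjones_apply (ν : Measure (Fin 3 → ℝ)) [IsFiniteMeasure ν] [ν.IsNegInvariant]
    (i j : Fin 2) :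
    ∫ x, Rjones x i j ∂ν =
      ((∫ x, Real.cos (nrm3 x) ∂ν : ℝ) : ℂ) * (1 : Matrix (Fin 2) (Fin 2) ℂ) i j := by
  have hint := integrable_Rjones_apply ν i j
  have hsymm (x : Fin 3 → ℝ) : Rjones x i j + Rjones (-x) i j =
      2 * ((Real.cos (nrm3 x) : ℂ) * (1 : Matrix (Fin 2) (Fin 2) ℂ) i j) := by
    rw [← Matrix.add_apply, Rjones_add_Rjones_neg, Matrix.smul_apply, smul_eq_mul, mul_assoc]
  refine mul_left_cancel₀ (two_ne_zero' ℂ) ?_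
  calc 2 * ∫ x, Rjones x i j ∂ν
      = ∫ x, Rjones x i j ∂ν + ∫ x, Rjones (-x) i j ∂ν := by
        rw [integral_neg_eq_self (fun x => Rjones x i j), two_mul]
    _ = ∫ x, Rjones x i j + Rjones (-x) i j ∂ν := (integral_add hint hint.comp_neg).symm
    _ = _ := by
        simp_rw [hsymm]
        rw [integral_const_mul, integral_mul_const, integral_complex_ofReal]

lemma integral_cos_nrm3_pi_gaussianReal (v : ℝ≥0) :
    ∫ x, Real.cos (nrm3 x) ∂Measure.pi (fun _ : Fin 3 => gaussianReal 0 v) =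
      (1 - (v : ℝ)) * Real.exp (-(v : ℝ) / 2) := by
  rw [← map_sqrt_smul_stdGaussian, integral_map (by fun_prop) (by fun_prop)]
  simp_rw [nrm3_smul, nrm3_eq_norm, WithLp.toLp_ofLp, abs_of_nonneg (Real.sqrt_nonneg _)]
  rw [integral_cos_mul_norm_stdGaussian finrank_euclideanSpace_fin, Real.sq_sqrt v.coe_nonneg,
    neg_div]

end Jones

/-- If `α` has i.i.d. `N(0, σ²)` components (`v = σ²` is the common variance), then
`E[R(α)] = (1 − σ²)·exp(−σ²/2)·I₂` (stated entrywise). -/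
theorem mean_Rjones {Ω : Type*} [MeasurableSpace Ω]
    (μ : Measure Ω) [IsProbabilityMeasure μ] (v : NNReal)
    (α : Ω → (Fin 3 → ℝ)) (hα : Measurable α)
    (hlaw : μ.map α = Measure.pi fun _ : Fin 3 => gaussianReal 0 v) :
    ∀ i j : Fin 2, ∫ ω, Rjones (α ω) i j ∂μ =
      (((1 - (v : ℝ)) * Real.exp (-(v : ℝ) / 2) : ℝ) : ℂ) *
        (1 : Matrix (Fin 2) (Fin 2) ℂ) i j := by
  intro i j
  rw [← integral_map (f := fun x => Rjones x i j) hα.aemeasurable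
    (measurable_Rjones_apply i j).aestronglyMeasurable, hlaw, integral_Rjones_apply,
    integral_cos_nrm3_pi_gaussianReal]
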